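/- arXiv:math/0405244 — 2 statements merged into one kernel-verified Lean document; each statement's English description precedes it below -/
import Mathlib

section
/- Let f : X × X → ℂ (with f(a−b, b) interpreted via the group difference a−b in X) and let g : X → ℂ. Then for every d ∈ X: Σ_{a∈X} ε₀·exp(−2πi⟨a,d⟩)·( Σ_{b∈X} ε₀·f(a−b, b)·g(b) ) = (Φ_d ∗ (Fg))(d), where Φ_d : X → ℂ is defined by Φ_d(r) = Σ_{b∈X} ε₀·exp(−2πi⟨r,b⟩)·( Σ_{c∈X} ε₀·exp(−2πi⟨c,d⟩)·f(c, b) ). -/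
open Complex Finset

noncomputable section

/-- Balanced representative of `z : ZMod n` in `[-n/2, n/2)`. -/
def bval (n : ℕ) (z : ZMod n) : ℤ :=
  if 2 * (z.val : ℤ) < (n : ℤ) then (z.val : ℤ) else (z.val : ℤ) - (n : ℤ)

/-- The real point `ε′·z′ ∈ [-H·H'/2, H·H'/2)` of `L′` corresponding to
`v : ZMod (H·H'^2)`; the group structure of `ZMod (H·H'^2)` realizes pointwise
addition followed by reduction modulo `H·H'` back into `L′`. -/
def Lp2 (H H' : ℕ) (v : ZMod (H * H' ^ 2)) : ℝ := (bval (H * H' ^ 2) v : ℝ) / H'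

/-- `X` is the finite abelian group of all functions from `L` (`H²` points) to `L′`. -/
abbrev X2 (H H' : ℕ) := ZMod (H ^ 2) → ZMod (H * H' ^ 2)

/-- `⟨a,b⟩ = ε·Σ_{k∈L} a(k)·b(k)` with `ε = 1/H`. -/
def ip2 (H H' : ℕ) [NeZero H] (a b : X2 H H') : ℝ :=
  (1 / H) * ∑ k : ZMod (H ^ 2), Lp2 H H' (a k) * Lp2 H H' (b k)

/-- `ε₀ = H^(−H²/2)·H′^(−H²)` (`H` is even, so `H²/2` is exact). -/
def eps02 (H H' : ℕ) : ℝ := ((H : ℝ) ^ (H ^ 2 / 2))⁻¹ * ((H' : ℝ) ^ (H ^ 2))⁻¹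

/-- `(Ff)(b) = Σ_{a∈X} ε₀·exp(−2πi⟨a,b⟩)·f(a)`. -/
def Ftr2 (H H' : ℕ) [NeZero H] [NeZero H'] (f : X2 H H' → ℂ) (b : X2 H H') : ℂ :=
  ∑ a : X2 H H',
    (eps02 H H' : ℂ) * Complex.exp (-2 * (Real.pi : ℂ) * I * (ip2 H H' a b : ℂ)) * f a

/-- `(f∗g)(a) = Σ_{a′∈X} ε₀·f(a−a′)·g(a′)`. -/
def conv2 (H H' : ℕ) [NeZero H] [NeZero H'] (f g : X2 H H' → ℂ) (a : X2 H H') : ℂ :=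
  ∑ a' : X2 H H', (eps02 H H' : ℂ) * f (a - a') * g a'

theorem bval_cast_aux (n : ℕ) [NeZero n] (z : ZMod n) : ((bval n z : ℤ) : ZMod n) = z := by
  unfold bval
  split_ifs <;> simp

/-- The pairing character argument. -/
def dot2 (H H' : ℕ) [NeZero H] (a b : X2 H H') : ZMod (H * H' ^ 2) :=
  ∑ k : ZMod (H ^ 2), a k * b k

theorem ker_eq_aux (H H' : ℕ) [NeZero H] [NeZero H'] (a b : X2 H H') :
    Complex.exp (-2 * (Real.pi : ℂ) * I * (ip2 H H' a b : ℂ)) =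
      ZMod.stdAddChar (-(dot2 H H' a b)) := by
  have h : -(dot2 H H' a b) =
      ((-(∑ k : ZMod (H ^ 2), bval _ (a k) * bval _ (b k)) : ℤ) : ZMod (H * H' ^ 2)) := by
    push_cast
    simp only [bval_cast_aux, dot2]
  have hH : (H : ℂ) ≠ 0 := by exact_mod_cast NeZero.ne H
  have hH' : (H' : ℂ) ≠ 0 := by exact_mod_cast NeZero.ne H'
  have hs : (ip2 H H' a b : ℂ) =
      (∑ k : ZMod (H ^ 2), (bval _ (a k) : ℂ) * (bval _ (b k) : ℂ)) / ((H : ℂ) * (H' : ℂ) ^ 2) := by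
    unfold ip2 Lp2
    push_cast
    rw [Finset.mul_sum, Finset.sum_div]
    refine Finset.sum_congr rfl fun k _ => ?_
    field_simp
  rw [h, ZMod.stdAddChar_coe, hs]
  congr 1
  push_cast
  ring

theorem orth_aux (H H' : ℕ) [NeZero H] [NeZero H'] (x : X2 H H') :
    ∑ r : X2 H H', (ZMod.stdAddChar (dot2 H H' x r) : ℂ) =
      if x = 0 then (Fintype.card (X2 H H') : ℂ) else 0 := by
  split_ifs with hx
  · subst hx
    simp [dot2]
  · let ψ : AddChar (X2 H H') ℂ :=
      { toFun := fun r => ZMod.stdAddChar (dot2 H H' x r)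
        map_zero_eq_one' := by simp [dot2]
        map_add_eq_mul' := by
          intro r s
          rw [← AddChar.map_add_eq_mul]
          simp [dot2, mul_add, Finset.sum_add_distrib] }
    have hψ : ψ ≠ 0 := by
      intro h0
      apply hx
      funext k
      have h1 : ψ (Pi.single k 1) = 1 := by rw [h0]; rfl
      have h2 : (ZMod.stdAddChar (dot2 H H' x (Pi.single k 1)) : ℂ) = 1 := h1
      have h3 : dot2 H H' x (Pi.single k 1) = x k := by
        simp [dot2, Pi.single_apply]
      rw [h3] at h2
      apply ZMod.injective_stdAddChar
      rw [h2]
      simp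
    exact AddChar.sum_eq_zero_iff_ne_zero.mpr hψ

theorem eps_aux (H H' : ℕ) [NeZero H] [NeZero H'] (hH : Even H) :
    (eps02 H H' : ℂ) * (eps02 H H' : ℂ) * (Fintype.card (X2 H H') : ℂ) = 1 := by
  have h0 : (H : ℂ) ≠ 0 := by exact_mod_cast NeZero.ne H
  have h0' : (H' : ℂ) ≠ 0 := by exact_mod_cast NeZero.ne H'
  have h2 : H ^ 2 / 2 + H ^ 2 / 2 = H ^ 2 := by
    obtain ⟨m, hm⟩ := (Nat.even_pow.mpr ⟨hH, two_ne_zero⟩ : Even (H ^ 2))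
    omega
  have hc : (Fintype.card (X2 H H') : ℂ) =
      (H : ℂ) ^ (H ^ 2 / 2) * (H : ℂ) ^ (H ^ 2 / 2) * ((H' : ℂ) ^ (H ^ 2)) ^ 2 := by
    rw [← pow_add, h2, Fintype.card_fun, ZMod.card, ZMod.card]
    push_cast
    rw [mul_pow, ← pow_mul, ← pow_mul, mul_comm 2]
  rw [hc]
  unfold eps02
  push_cast
  generalize hu : (H : ℂ) ^ (H ^ 2 / 2) = u
  generalize hv : (H' : ℂ) ^ (H ^ 2) = v
  have hu0 : u ≠ 0 := hu ▸ pow_ne_zero _ h0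
  have hv0 : v ≠ 0 := hv ▸ pow_ne_zero _ h0'
  field_simp

/-- for `f : X × X → ℂ` and `g : X → ℂ`, the Fourier transform in `a` of
`Σ_b ε₀·f(a−b,b)·g(b)` at `d` equals `(Φ_d ∗ (Fg))(d)`, where
`Φ_d(r) = Σ_b ε₀·exp(−2πi⟨r,b⟩)·(Σ_c ε₀·exp(−2πi⟨c,d⟩)·f(c,b))`. -/
theorem stmt13 (H H' : ℕ) [NeZero H] [NeZero H'] (hH : Even H) (hH' : Even H')
    (f : X2 H H' → X2 H H' → ℂ) (g : X2 H H' → ℂ) (d : X2 H H') :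
    (∑ a : X2 H H',
        (eps02 H H' : ℂ) * Complex.exp (-2 * (Real.pi : ℂ) * I * (ip2 H H' a d : ℂ)) *
          (∑ b : X2 H H', (eps02 H H' : ℂ) * f (a - b) b * g b)) =
      conv2 H H'
        (fun r => ∑ b : X2 H H',
          (eps02 H H' : ℂ) * Complex.exp (-2 * (Real.pi : ℂ) * I * (ip2 H H' r b : ℂ)) *
            (∑ c : X2 H H',
              (eps02 H H' : ℂ) * Complex.exp (-2 * (Real.pi : ℂ) * I * (ip2 H H' c d : ℂ)) *
                f c b))
        (Ftr2 H H' g) d := by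
  have he := eps_aux H H' hH
  unfold conv2 Ftr2
  simp only [ker_eq_aux]
  generalize (eps02 H H' : ℂ) = e at *
  have hL : ∀ b c : X2 H H', (ZMod.stdAddChar (-(dot2 H H' (c + b) d)) : ℂ) =
      ZMod.stdAddChar (-(dot2 H H' c d)) * ZMod.stdAddChar (-(dot2 H H' b d)) := by
    intro b c
    rw [← AddChar.map_add_eq_mul]
    congr 1
    simp [dot2, add_mul, Finset.sum_add_distrib]
    ring
  have hK : ∀ r b a : X2 H H', (ZMod.stdAddChar (-(dot2 H H' (d - r) b)) : ℂ) *
      ZMod.stdAddChar (-(dot2 H H' a r)) =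
      ZMod.stdAddChar (-(dot2 H H' b d)) * ZMod.stdAddChar (dot2 H H' (b - a) r) := by
    intro r b a
    rw [← AddChar.map_add_eq_mul, ← AddChar.map_add_eq_mul]
    congr 1
    simp only [dot2, Pi.sub_apply, ← Finset.sum_neg_distrib, ← Finset.sum_add_distrib]
    refine Finset.sum_congr rfl fun k _ => ?_
    ring
  -- name the inner sum
  set F : X2 H H' → ℂ := fun b => ∑ c : X2 H H',
    e * ZMod.stdAddChar (-(dot2 H H' c d)) * f c b with hF
  have lhs : (∑ a : X2 H H', e * ZMod.stdAddChar (-(dot2 H H' a d)) *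
      (∑ b : X2 H H', e * f (a - b) b * g b)) =
      ∑ b : X2 H H', e * ZMod.stdAddChar (-(dot2 H H' b d)) * F b * g b := by
    simp only [Finset.mul_sum]
    rw [Finset.sum_comm]
    refine Finset.sum_congr rfl fun b _ => ?_
    rw [← Equiv.sum_comp (Equiv.addRight b)]
    simp only [hF, Equiv.coe_addRight, add_sub_cancel_right, hL, Finset.mul_sum, Finset.sum_mul]
    refine Finset.sum_congr rfl fun c _ => ?_
    ring
  rw [lhs]
  have hFb : ∀ b : X2 H H', (∑ c : X2 H H',
      e * ZMod.stdAddChar (-(dot2 H H' c d)) * f c b) = F b := fun _ => rfl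
  simp only [hFb]
  clear hFb lhs
  clear_value F
  symm
  calc (∑ r : X2 H H', e * (∑ b : X2 H H',
          e * ZMod.stdAddChar (-(dot2 H H' (d - r) b)) * F b) *
          ∑ a : X2 H H', e * ZMod.stdAddChar (-(dot2 H H' a r)) * g a)
      = ∑ r : X2 H H', ∑ b : X2 H H', ∑ a : X2 H H',
          (e * e * e * ZMod.stdAddChar (-(dot2 H H' b d)) * F b * g a) *
            ZMod.stdAddChar (dot2 H H' (b - a) r) := by
        refine Finset.sum_congr rfl fun r _ => ?_
        rw [mul_assoc, Finset.sum_mul, Finset.mul_sum]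
        refine Finset.sum_congr rfl fun b _ => ?_
        rw [Finset.mul_sum, Finset.mul_sum]
        refine Finset.sum_congr rfl fun a _ => ?_
        linear_combination (e * e * e * F b * g a) * hK r b a
    _ = ∑ b : X2 H H', ∑ a : X2 H H',
          (e * e * e * ZMod.stdAddChar (-(dot2 H H' b d)) * F b * g a) *
            ∑ r : X2 H H', ZMod.stdAddChar (dot2 H H' (b - a) r) := by
        rw [Finset.sum_comm]
        refine Finset.sum_congr rfl fun b _ => ?_
        rw [Finset.sum_comm]
        refine Finset.sum_congr rfl fun a _ => ?_
        rw [Finset.mul_sum]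
    _ = _ := by
        refine Finset.sum_congr rfl fun b _ => ?_
        simp only [orth_aux, sub_eq_zero, mul_ite, mul_zero, Finset.sum_ite_eq,
          Finset.mem_univ, if_true]
        linear_combination (e * ZMod.stdAddChar (-(dot2 H H' b d)) * F b * g b) * he
end
end

section
/- Define the functional f : X → ℂ by f(a) = exp(iπ·ε·Σ_{k∈L} a(k)²). Then Σ_{a∈X} ε₀·exp(iπ·ε·Σ_{k∈L} a(k)²) = (−1)^(H/2), and for every b ∈ X: (Ff)(b) = (−1)^(H/2)·conj(f(b)) = (−1)^(H/2)·exp(−iπ·ε·Σ_{k∈L} b(k)²). -/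
open Complex Finset

noncomputable section

/-- The quadratic exponential `exp(iπ z²/N)`. -/
def qE (N : ℕ) (z : ℤ) : ℂ := cexp ((Real.pi : ℂ) * I * ((z : ℂ) ^ 2 / (N : ℂ)))

lemma qE_add_mul (N : ℕ) [NeZero N] (hN : Even N) (z m : ℤ) : qE N (z + m * N) = qE N z := by
  obtain ⟨c, hc⟩ := hN
  have hN0 : (N : ℂ) ≠ 0 := by exact_mod_cast NeZero.ne N
  unfold qE
  rw [Complex.exp_eq_exp_iff_exists_int]
  refine ⟨z * m + m ^ 2 * c, ?_⟩
  have hc' : (N : ℂ) = c + c := by exact_mod_cast congrArg (Nat.cast : ℕ → ℂ) hc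
  have h1 : ((z + m * N : ℤ) : ℂ) ^ 2 / (N : ℂ) = (z : ℂ) ^ 2 / N + 2 * z * m + m ^ 2 * N := by
    push_cast
    field_simp
    ring
  rw [h1, hc']
  push_cast
  ring

lemma qE_congr (N : ℕ) [NeZero N] (hN : Even N) (x y : ℤ) (h : (x : ZMod N) = (y : ZMod N)) :
    qE N x = qE N y := by
  rw [ZMod.intCast_eq_intCast_iff_dvd_sub] at h
  obtain ⟨m, hm⟩ := h
  have : y = x + m * N := by linarith
  rw [this, qE_add_mul N hN]

lemma bval_cast (N : ℕ) [NeZero N] (v : ZMod N) : ((bval N v : ℤ) : ZMod N) = v := by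
  unfold bval
  split_ifs <;> simp

open HurwitzZeta Filter Topology

lemma theta_dec (N : ℕ) [NeZero N] (hN : Even N) (s : ℝ) (hs : 0 < s) :
    jacobiTheta (1 / (N : ℂ) + I * (s / (N : ℂ) ^ 2)) =
      ∑ r : Fin N, qE N ((r : ℕ) : ℤ) *
        ((evenKernel (((r : ℕ) / (N : ℝ) : ℝ) : UnitAddCircle) s : ℝ) : ℂ) := by
  have hN0 : (N : ℂ) ≠ 0 := by exact_mod_cast NeZero.ne N
  have hNR : (0 : ℝ) < N := by exact_mod_cast Nat.pos_of_ne_zero (NeZero.ne N)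
  have him : 0 < (1 / (N : ℂ) + I * (s / (N : ℂ) ^ 2)).im := by
    have : (1 / (N : ℂ) + I * (s / (N : ℂ) ^ 2)) =
      ((1 / N : ℝ) : ℂ) + ((s / N ^ 2 : ℝ) : ℂ) * I := by push_cast; ring
    rw [this]
    simp only [add_im, ofReal_im, mul_im, I_im, I_re, ofReal_re]
    simp
    positivity
  have h1 := hasSum_jacobiTheta₂_term 0 him
  rw [← jacobiTheta_eq_jacobiTheta₂] at h1
  rw [← (Int.divModEquiv N).symm.hasSum_iff, ← (Equiv.prodComm (Fin N) ℤ).hasSum_iff] at h1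
  have h2 : ∀ r : Fin N, HasSum (fun m : ℤ =>
      (((jacobiTheta₂_term · 0 (1 / (N : ℂ) + I * (s / (N : ℂ) ^ 2))) ∘
        (Int.divModEquiv N).symm) ∘ (Equiv.prodComm (Fin N) ℤ)) (r, m))
      (qE N ((r : ℕ) : ℤ) *
        ((evenKernel (((r : ℕ) / (N : ℝ) : ℝ) : UnitAddCircle) s : ℝ) : ℂ)) := by
    intro r
    have h3 := (hasSum_ofReal.mpr (hasSum_int_evenKernel ((r : ℕ) / (N : ℝ)) hs)).mul_left
      (qE N ((r : ℕ) : ℤ))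
    refine h3.congr_fun ?_
    intro m
    simp only [Function.comp_apply, Equiv.prodComm_apply, Prod.swap_prod_mk,
      Int.divModEquiv_symm_apply, jacobiTheta₂_term]
    rw [← qE_add_mul N hN _ m]
    unfold qE
    push_cast
    rw [← Complex.exp_add]
    congr 1
    field_simp
    ring_nf
    rw [I_sq]
    ring
  have h4 := h1.prod_fiberwise h2
  exact h4.unique (hasSum_fintype _)

lemma evenKernel_lim (a : UnitAddCircle) :
    Tendsto (fun s : ℝ => s ^ (1 / 2 : ℝ) * evenKernel a s) (𝓝[>] 0) (𝓝 1) := by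
  obtain ⟨p, hp, h⟩ := isBigO_atTop_cosKernel_sub a
  have h0 : Tendsto (fun x : ℝ => Real.exp (-p * x)) atTop (𝓝 0) := by
    have : Tendsto (fun x : ℝ => p * x) atTop atTop := tendsto_id.const_mul_atTop hp
    simpa [Function.comp_def] using Real.tendsto_exp_neg_atTop_nhds_zero.comp this
  have h1 : Tendsto (cosKernel a) atTop (𝓝 1) := by
    simpa using (h.trans_tendsto h0).add_const 1
  have h2 := h1.comp tendsto_inv_nhdsGT_zero
  refine h2.congr' ?_
  filter_upwards [self_mem_nhdsWithin] with s hs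
  have hs' : (0 : ℝ) < s := hs
  have : s ^ (1 / 2 : ℝ) ≠ 0 := (Real.rpow_pos_of_pos hs' _).ne'
  rw [evenKernel_functional_equation]
  simp only [Function.comp_apply]
  rw [← mul_assoc, mul_one_div_cancel this, one_mul, one_div]

lemma theta_S4 (τ : ℂ) (h : 0 < τ.im) :
    jacobiTheta (-1 / τ) ^ 4 = - τ ^ 2 * jacobiTheta τ ^ 4 := by
  have h0 : τ ≠ 0 := by rintro rfl; simp at h
  have h1 := jacobiTheta_S_smul ⟨τ, h⟩
  rw [UpperHalfPlane.modular_S_smul] at h1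
  have h2 : ((-I * τ) ^ (1 / 2 : ℂ)) ^ 4 = - τ ^ 2 := by
    rw [← Complex.cpow_nat_mul]
    norm_num
    rw [mul_pow, I_sq]
    ring
  simp only [UpperHalfPlane.coe_mk] at h1
  have h3 : (-τ)⁻¹ = -1 / τ := by rw [inv_neg]; ring
  rw [h3] at h1
  rw [h1, mul_pow, h2]

lemma theta_add_even (N : ℕ) (hN : Even N) (τ : ℂ) : jacobiTheta (N + τ) = jacobiTheta τ := by
  obtain ⟨c, rfl⟩ := hN
  induction c with
  | zero => simp
  | succ c ih =>
    rw [← ih, ← jacobiTheta_two_add (((c + c : ℕ) : ℂ) + τ)]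
    congr 1
    push_cast
    ring

lemma theta_rel (N : ℕ) [NeZero N] (hN : Even N) (s : ℝ) (hs : 0 < s) :
    jacobiTheta (-1 / (N : ℂ) + I * (1 / s)) ^ 4 =
      -(s ^ 2 / (N : ℂ) ^ 2) * jacobiTheta (1 / (N : ℂ) + I * (s / (N : ℂ) ^ 2)) ^ 4 := by
  have hN0 : (N : ℂ) ≠ 0 := by exact_mod_cast NeZero.ne N
  have hs0 : (s : ℂ) ≠ 0 := by exact_mod_cast hs.ne'
  have hNR : (0 : ℝ) < N := by exact_mod_cast Nat.pos_of_ne_zero (NeZero.ne N)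
  set τ : ℂ := 1 / (N : ℂ) + I * (s / (N : ℂ) ^ 2) with hτ
  set σ : ℂ := -1 / (N : ℂ) + I * (1 / s) with hσ
  have h1 : 0 < τ.im := by
    have : τ = ((1 / N : ℝ) : ℂ) + ((s / N ^ 2 : ℝ) : ℂ) * I := by rw [hτ]; push_cast; ring
    rw [this]
    simp only [add_im, ofReal_im, mul_im, I_im, I_re, ofReal_re]
    simp
    positivity
  have h2 : 0 < σ.im := by
    have : σ = ((-1 / N : ℝ) : ℂ) + ((1 / s : ℝ) : ℂ) * I := by rw [hσ]; push_cast; ring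
    rw [this]
    simp only [add_im, ofReal_im, mul_im, I_im, I_re, ofReal_re]
    simp
    positivity
  have hτ0 : τ ≠ 0 := by intro h; simp [h] at h1
  have hσ0 : σ ≠ 0 := by intro h; simp [h] at h2
  have hst : σ = I * N / s * τ := by
    rw [hσ, hτ]
    field_simp
    ring_nf
    rw [I_sq]
    ring
  have e : -1 / σ = N + -1 / τ := by
    have hNt : N * N * τ = N + I * s := by rw [hτ]; field_simp
    rw [hst]
    field_simp
    linear_combination (-I) * hNt + (-s) * I_sq
  have h3 := theta_S4 τ h1
  have h4 := theta_S4 σ h2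
  rw [e, theta_add_even N hN, h3] at h4
  have hτ2 : τ ^ 2 ≠ 0 := pow_ne_zero _ hτ0
  have h5 : τ ^ 2 * (jacobiTheta τ ^ 4 * s ^ 2) = τ ^ 2 * (- N ^ 2 * jacobiTheta σ ^ 4) := by
    have hσ2 : σ ^ 2 * s ^ 2 = -N ^ 2 * τ ^ 2 := by
      rw [hst]
      field_simp
      rw [I_sq]
    linear_combination (-(s : ℂ) ^ 2) * h4 + jacobiTheta σ ^ 4 * hσ2
  have h6 := mul_left_cancel₀ hτ2 h5
  field_simp
  linear_combination h6

lemma gauss4 (N : ℕ) [NeZero N] (hN : Even N) :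
    (∑ r : Fin N, qE N ((r : ℕ) : ℤ)) ^ 4 = -(N : ℂ) ^ 2 := by
  have hN0 : (N : ℂ) ≠ 0 := by exact_mod_cast NeZero.ne N
  have l1 : Tendsto (fun s : ℝ => ((s ^ (1 / 2 : ℝ) : ℝ) : ℂ) *
      jacobiTheta (1 / (N : ℂ) + I * (s / (N : ℂ) ^ 2))) (𝓝[>] 0)
      (𝓝 (∑ r : Fin N, qE N ((r : ℕ) : ℤ))) := by
    have : Tendsto (fun s : ℝ => ∑ r : Fin N, qE N ((r : ℕ) : ℤ) *
        ((s ^ (1 / 2 : ℝ) * evenKernel (((r : ℕ) / (N : ℝ) : ℝ) : UnitAddCircle) s : ℝ) : ℂ))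
        (𝓝[>] 0) (𝓝 (∑ r : Fin N, qE N ((r : ℕ) : ℤ) * ((1 : ℝ) : ℂ))) := by
      refine tendsto_finsetSum _ fun r _ => ?_
      exact ((Complex.continuous_ofReal.tendsto _).comp (evenKernel_lim _)).const_mul _
    simp only [ofReal_one, mul_one] at this
    refine this.congr' ?_
    filter_upwards [self_mem_nhdsWithin] with s hs
    rw [theta_dec N hN s hs, Finset.mul_sum]
    refine Finset.sum_congr rfl fun r _ => ?_
    push_cast
    ring
  have l2 : Tendsto (fun s : ℝ => jacobiTheta (-1 / (N : ℂ) + I * (1 / s))) (𝓝[>] 0) (𝓝 1) := by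
    have him : Tendsto (fun s : ℝ => (-1 / (N : ℂ) + I * (1 / s))) (𝓝[>] 0)
        (comap im atTop) := by
      rw [tendsto_comap_iff]
      refine tendsto_inv_nhdsGT_zero.congr ?_
      intro s
      have : (-1 / (N : ℂ) + I * (1 / s)) = ((-1 / N : ℝ) : ℂ) + ((s⁻¹ : ℝ) : ℂ) * I := by
        push_cast; ring
      rw [Function.comp_apply, this]
      simp only [add_im, ofReal_im, mul_im, I_im, I_re, ofReal_re]
      simp
    have h0 : Tendsto (fun τ : ℂ => Real.exp (-Real.pi * τ.im)) (comap im atTop) (𝓝 0) := by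
      have : Tendsto (fun τ : ℂ => Real.pi * τ.im) (comap im atTop) atTop :=
        tendsto_comap.const_mul_atTop Real.pi_pos
      simpa [Function.comp_def] using Real.tendsto_exp_neg_atTop_nhds_zero.comp this
    have h1 := (isBigO_at_im_infty_jacobiTheta_sub_one.trans_tendsto h0).add_const 1
    simp only [sub_add_cancel, zero_add] at h1
    exact h1.comp him
  have l3 := (l1.pow 4).const_mul (-(1 / (N : ℂ) ^ 2))
  have l4 := l2.pow 4
  have l5 := l3.congr' (f₂ := fun s : ℝ => jacobiTheta (-1 / (N : ℂ) + I * (1 / s)) ^ 4) (by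
    filter_upwards [self_mem_nhdsWithin] with s hs
    have hs' : (0 : ℝ) < s := hs
    rw [theta_rel N hN s hs, mul_pow]
    have : ((s ^ (1 / 2 : ℝ) : ℝ) : ℂ) ^ 4 = s ^ 2 := by
      rw [← ofReal_pow, ← Real.rpow_natCast, ← Real.rpow_mul hs'.le]
      norm_num
    rw [this]
    ring)
  have h := tendsto_nhds_unique l5 l4
  field_simp at h
  linear_combination -h

lemma sum_qE (N : ℕ) [NeZero N] (hN : Even N) (w : ℤ) :
    (∑ v : ZMod N, qE N (bval N v - w)) ^ 4 = -(N : ℂ) ^ 2 := by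
  rw [← gauss4 N hN]
  congr 1
  have h1 : ∑ v : ZMod N, qE N (bval N v - w) = ∑ v : ZMod N, qE N (v.val : ℤ) := by
    rw [← Equiv.sum_comp (Equiv.subRight (w : ZMod N)) (fun v => qE N (v.val : ℤ))]
    refine Finset.sum_congr rfl fun v _ => ?_
    apply qE_congr N hN
    simp [bval_cast]
  rw [h1]
  obtain ⟨n, rfl⟩ := Nat.exists_eq_succ_of_ne_zero (NeZero.ne N)
  rfl

lemma sum_qE_indep (N : ℕ) [NeZero N] (hN : Even N) (w : ℤ) :
    (∑ v : ZMod N, qE N (bval N v - w)) = ∑ v : ZMod N, qE N (bval N v) := by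
  rw [← Equiv.sum_comp (Equiv.subRight (w : ZMod N)) (fun v => qE N (bval N v))]
  refine Finset.sum_congr rfl fun v _ => ?_
  apply qE_congr N hN
  simp [bval_cast]

lemma eps_gauss (H H' : ℕ) [NeZero H] [NeZero H'] (hH : Even H) :
    (eps02 H H' : ℂ) * (∑ v : ZMod (H * H' ^ 2), qE (H * H' ^ 2) (bval (H * H' ^ 2) v)) ^ (H ^ 2)
      = (-1 : ℂ) ^ (H / 2) := by
  have hN : Even (H * H' ^ 2) := hH.mul_right _
  have hh := sum_qE (H * H' ^ 2) hN 0
  simp only [sub_zero] at hh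
  have h0 : (H : ℂ) ≠ 0 := by exact_mod_cast NeZero.ne H
  have h0' : (H' : ℂ) ≠ 0 := by exact_mod_cast NeZero.ne H'
  obtain ⟨m, hm⟩ := hH
  have e1 : H ^ 2 = 4 * m ^ 2 := by rw [hm]; ring
  have e2 : H ^ 2 / 2 = 2 * m ^ 2 := by omega
  have e3 : H / 2 = m := by omega
  have e4 : ((-1 : ℂ)) ^ (m ^ 2) = (-1) ^ m := by
    rcases Nat.even_or_odd m with h | h
    · rw [h.neg_one_pow, (h.pow_of_ne_zero two_ne_zero).neg_one_pow]
    · rw [h.neg_one_pow, h.pow.neg_one_pow]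
  unfold eps02
  rw [e2, e3, e1, pow_mul (∑ v : ZMod (H * H' ^ 2), _) 4, hh, ← e4, neg_pow]
  push_cast
  rw [pow_mul _ 2, pow_mul _ 4]
  have : ((((H : ℂ) * H' ^ 2) ^ 2)) ^ m ^ 2 = ((H : ℂ) ^ 2) ^ m ^ 2 * ((H' : ℂ) ^ 4) ^ m ^ 2 := by
    rw [← mul_pow]; ring
  rw [this]
  field_simp

lemma f_prod (H H' : ℕ) [NeZero H] [NeZero H'] (a : X2 H H') :
    Complex.exp ((Real.pi : ℂ) * I * (1 / (H : ℂ)) *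
            ∑ k : ZMod (H ^ 2), ((Lp2 H H' (a k) : ℝ) : ℂ) ^ 2) =
      ∏ k : ZMod (H ^ 2), qE (H * H' ^ 2) (bval (H * H' ^ 2) (a k)) := by
  have h0 : (H : ℂ) ≠ 0 := by exact_mod_cast NeZero.ne H
  have h0' : (H' : ℂ) ≠ 0 := by exact_mod_cast NeZero.ne H'
  unfold qE Lp2
  rw [← Complex.exp_sum, Finset.mul_sum]
  congr 1
  refine Finset.sum_congr rfl fun k _ => ?_
  push_cast
  field_simp

lemma sum_pi_prod (H H' : ℕ) [NeZero H] [NeZero H'] (g : ZMod (H ^ 2) → ZMod (H * H' ^ 2) → ℂ) :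
    ∑ a : X2 H H', ∏ k, g k (a k) = ∏ k, ∑ v, g k v := by
  rw [Finset.prod_univ_sum, Fintype.piFinset_univ]

lemma part_one (H H' : ℕ) [NeZero H] [NeZero H'] (hH : Even H) :
    (∑ a : X2 H H',
        (eps02 H H' : ℂ) *
          Complex.exp ((Real.pi : ℂ) * I * (1 / (H : ℂ)) *
            ∑ k : ZMod (H ^ 2), ((Lp2 H H' (a k) : ℝ) : ℂ) ^ 2)) = (-1 : ℂ) ^ (H / 2) := by
  simp_rw [f_prod]
  rw [← Finset.mul_sum, sum_pi_prod H H' (fun _ v => qE (H * H' ^ 2) (bval (H * H' ^ 2) v)),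
    Finset.prod_const, Finset.card_univ, ZMod.card, eps_gauss H H' hH]

lemma part_two (H H' : ℕ) [NeZero H] [NeZero H'] (hH : Even H) (b : X2 H H') :
      Ftr2 H H'
          (fun a => Complex.exp ((Real.pi : ℂ) * I * (1 / (H : ℂ)) *
            ∑ k : ZMod (H ^ 2), ((Lp2 H H' (a k) : ℝ) : ℂ) ^ 2)) b =
        (-1 : ℂ) ^ (H / 2) *
          Complex.exp (-(Real.pi : ℂ) * I * (1 / (H : ℂ)) *
            ∑ k : ZMod (H ^ 2), ((Lp2 H H' (b k) : ℝ) : ℂ) ^ 2) := by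
  have h0 : (H : ℂ) ≠ 0 := by exact_mod_cast NeZero.ne H
  have h0' : (H' : ℂ) ≠ 0 := by exact_mod_cast NeZero.ne H'
  have hN : Even (H * H' ^ 2) := hH.mul_right _
  have key : ∀ a : X2 H H', (eps02 H H' : ℂ) *
      Complex.exp (-2 * (Real.pi : ℂ) * I * (ip2 H H' a b : ℂ)) *
      Complex.exp ((Real.pi : ℂ) * I * (1 / (H : ℂ)) *
            ∑ k : ZMod (H ^ 2), ((Lp2 H H' (a k) : ℝ) : ℂ) ^ 2) =
      (eps02 H H' : ℂ) * Complex.exp (-(Real.pi : ℂ) * I * (1 / (H : ℂ)) *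
            ∑ k : ZMod (H ^ 2), ((Lp2 H H' (b k) : ℝ) : ℂ) ^ 2) *
      ∏ k : ZMod (H ^ 2), qE (H * H' ^ 2) (bval (H * H' ^ 2) (a k) - bval (H * H' ^ 2) (b k)) := by
    intro a
    unfold qE ip2 Lp2
    rw [← Complex.exp_sum, mul_assoc, mul_assoc (eps02 H H' : ℂ), ← Complex.exp_add, ← Complex.exp_add]
    congr 2
    push_cast
    simp only [Finset.mul_sum]
    rw [← Finset.sum_add_distrib, ← Finset.sum_add_distrib]
    refine Finset.sum_congr rfl fun k _ => ?_
    field_simp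
    ring
  unfold Ftr2
  simp_rw [key]
  rw [← Finset.mul_sum, sum_pi_prod H H'
    (fun k v => qE (H * H' ^ 2) (bval (H * H' ^ 2) v - bval (H * H' ^ 2) (b k)))]
  simp_rw [sum_qE_indep _ hN]
  rw [Finset.prod_const, Finset.card_univ, ZMod.card, ← eps_gauss H H' hH]
  ring

/-- for `f(a) = exp(iπ·ε·Σ_k a(k)²)`, one has
`Σ_{a∈X} ε₀·f(a) = (−1)^(H/2)` and `(Ff)(b) = (−1)^(H/2)·conj(f(b))
= (−1)^(H/2)·exp(−iπ·ε·Σ_k b(k)²)` for every `b ∈ X`. -/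
theorem stmt18 (H H' : ℕ) [NeZero H] [NeZero H'] (hH : Even H) (hH' : Even H') :
    (∑ a : X2 H H',
        (eps02 H H' : ℂ) *
          Complex.exp ((Real.pi : ℂ) * I * (1 / (H : ℂ)) *
            ∑ k : ZMod (H ^ 2), ((Lp2 H H' (a k) : ℝ) : ℂ) ^ 2)) = (-1 : ℂ) ^ (H / 2) ∧
    ∀ b : X2 H H',
      Ftr2 H H'
          (fun a => Complex.exp ((Real.pi : ℂ) * I * (1 / (H : ℂ)) *
            ∑ k : ZMod (H ^ 2), ((Lp2 H H' (a k) : ℝ) : ℂ) ^ 2)) b =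
        (-1 : ℂ) ^ (H / 2) *
          (starRingEnd ℂ) (Complex.exp ((Real.pi : ℂ) * I * (1 / (H : ℂ)) *
            ∑ k : ZMod (H ^ 2), ((Lp2 H H' (b k) : ℝ) : ℂ) ^ 2)) ∧
      Ftr2 H H'
          (fun a => Complex.exp ((Real.pi : ℂ) * I * (1 / (H : ℂ)) *
            ∑ k : ZMod (H ^ 2), ((Lp2 H H' (a k) : ℝ) : ℂ) ^ 2)) b =
        (-1 : ℂ) ^ (H / 2) *
          Complex.exp (-(Real.pi : ℂ) * I * (1 / (H : ℂ)) *
            ∑ k : ZMod (H ^ 2), ((Lp2 H H' (b k) : ℝ) : ℂ) ^ 2) := by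
  refine ⟨part_one H H' hH, fun b => ⟨?_, part_two H H' hH b⟩⟩
  rw [part_two H H' hH b, ← Complex.exp_conj]
  congr 2
  simp
end
end
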